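/- arXiv:1411.4545 — 2 statements merged into one kernel-verified Lean document; each statement's English description precedes it below -/
import Mathlib

section
/- For every δ ∈ (0, 1/2) there exists a constant K > 0 such that for all x with 0 < x ≤ 1 one has |V₁(x) − 1| ≤ K · x^{1/2 − δ}. -/
open Complex

/-- The weight function `V₁` from the approximate functional equation for `L(1/2, χ)`:
`V₁(x) = (1/2πi) ∫_(1) (√π x)^{-s} Γ((2s+1)/4)/Γ(1/4) ds/s`, the integral taken
along the vertical line `Re s = 1`. -/
noncomputable def V₁ (x : ℝ) : ℂ :=
  (1 / (2 * Real.pi)) * ∫ t : ℝ,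
    (((Real.sqrt Real.pi * x : ℝ) : ℂ) ^ (-(1 + t * I))) *
      (Complex.Gamma ((2 * (1 + t * I) + 1) / 4) / Complex.Gamma (1 / 4)) *
      (1 + t * I)⁻¹

/-- The kernel `u^(-1/2) e^(-u^2)`. -/
noncomputable def hker (u : ℝ) : ℝ := u ^ (-(1/2) : ℝ) * Real.exp (-u ^ (2:ℝ))

/-- The tail integral of the kernel. -/
noncomputable def Gtail (y : ℝ) : ℝ := (1/2) * Real.Gamma (1/4) - ∫ u in (0:ℝ)..y, hker u

section helpers
open MeasureTheory Set Filter Topology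

lemma hker_int : IntegrableOn hker (Ioi 0) :=
  integrableOn_rpow_mul_exp_neg_rpow (by norm_num) (by norm_num)

lemma hker_total : ∫ u in Ioi (0:ℝ), hker u = (1/2) * Real.Gamma (1/4) := by
  have := _root_.integral_rpow_mul_exp_neg_rpow (p := 2) (q := -(1/2)) (by norm_num) (by norm_num)
  simp only [hker]
  rw [this]
  norm_num

lemma hker_nonneg {u : ℝ} (hu : 0 ≤ u) : 0 ≤ hker u := by
  unfold hker; positivity

lemma hker_ii {y : ℝ} (hy : 0 ≤ y) : IntervalIntegrable hker volume 0 y := by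
  rw [intervalIntegrable_iff_integrableOn_Ioc_of_le hy]
  exact hker_int.mono_set Ioc_subset_Ioi_self

lemma Gtail_eq {y : ℝ} (hy : 0 ≤ y) : Gtail y = ∫ u in Ioi y, hker u := by
  have h := intervalIntegral.integral_interval_add_Ioi' (hker_ii hy)
    (hker_int.mono_set (Ioi_subset_Ioi hy))
  rw [hker_total] at h
  unfold Gtail
  linarith

lemma Gtail_nonneg {y : ℝ} (hy : 0 ≤ y) : 0 ≤ Gtail y := by
  rw [Gtail_eq hy]
  exact setIntegral_nonneg measurableSet_Ioi (fun u hu => hker_nonneg (hy.trans (le_of_lt hu)))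

lemma Gtail_le {y : ℝ} (hy : 0 ≤ y) : Gtail y ≤ (1/2) * Real.Gamma (1/4) := by
  have : 0 ≤ ∫ u in (0:ℝ)..y, hker u :=
    intervalIntegral.integral_nonneg hy (fun u hu => hker_nonneg hu.1)
  unfold Gtail; linarith

lemma Gtail_le_exp {y : ℝ} (hy : 1 ≤ y) : Gtail y ≤ Real.exp (-y) := by
  have hy0 : 0 ≤ y := by linarith
  rw [Gtail_eq hy0, ← integral_exp_neg_Ioi]
  refine setIntegral_mono_on (hker_int.mono_set (Ioi_subset_Ioi hy0))
    (integrableOn_exp_neg_Ioi y) measurableSet_Ioi ?_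
  intro u hu
  have hu1 : 1 ≤ u := hy.trans (le_of_lt hu)
  unfold hker
  have h1 : u ^ (-(1/2) : ℝ) ≤ 1 := Real.rpow_le_one_of_one_le_of_nonpos hu1 (by norm_num)
  have h2 : Real.exp (-u ^ (2:ℝ)) ≤ Real.exp (-u) := by
    apply Real.exp_le_exp.mpr
    rw [Real.rpow_two]
    nlinarith
  calc _ ≤ 1 * Real.exp (-u) := by gcongr
    _ = _ := one_mul _

lemma Gtail_near {y : ℝ} (hy : 0 ≤ y) :
    |Gtail y - (1/2) * Real.Gamma (1/4)| ≤ 2 * y ^ (1/2 : ℝ) := by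
  have h0 : 0 ≤ ∫ u in (0:ℝ)..y, hker u :=
    intervalIntegral.integral_nonneg hy (fun u hu => hker_nonneg hu.1)
  have h1 : ∫ u in (0:ℝ)..y, hker u ≤ ∫ u in (0:ℝ)..y, u ^ (-(1/2) : ℝ) := by
    refine intervalIntegral.integral_mono_on hy (hker_ii hy)
      (intervalIntegral.intervalIntegrable_rpow' (by norm_num)) ?_
    intro u hu
    unfold hker
    have : 0 ≤ u := hu.1
    exact mul_le_of_le_one_right (by positivity) (Real.exp_le_one_iff.mpr (by
      have : 0 ≤ u ^ (2:ℝ) := by positivity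
      linarith))
  rw [integral_rpow (Or.inl (by norm_num))] at h1
  norm_num at h1
  have : Gtail y - (1/2) * Real.Gamma (1/4) = - ∫ u in (0:ℝ)..y, hker u := by
    unfold Gtail; ring
  rw [this, abs_neg, abs_of_nonneg h0]
  norm_num
  linarith

lemma Gtail_deriv {y : ℝ} (hy : 0 < y) : HasDerivAt Gtail (-hker y) y := by
  have hc : ∀ z ∈ Ioi (0:ℝ), ContinuousAt hker z := by
    intro z hz
    unfold hker
    have hz' : z ≠ 0 := ne_of_gt hz
    fun_prop (disch := first | assumption | (left; assumption) | norm_num)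
  have hm : StronglyMeasurableAtFilter hker (𝓝 y) volume :=
    ContinuousAt.stronglyMeasurableAtFilter isOpen_Ioi hc y hy
  exact (intervalIntegral.integral_hasDerivAt_right (hker_ii hy.le) hm (hc y hy)).const_sub _

lemma Gc_conv {s : ℂ} (hs : 0 < s.re) : MellinConvergent (fun y => (Gtail y : ℂ)) s := by
  refine mellinConvergent_of_isBigO_rpow_exp (a := 1) (b := 0) one_pos ?_ ?_ ?_ hs
  · refine ContinuousOn.locallyIntegrableOn ?_ measurableSet_Ioi
    intro y hy
    exact (continuous_ofReal.continuousAt.comp (Gtail_deriv hy).continuousAt).continuousWithinAt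
  · refine Asymptotics.IsBigO.of_bound 1 ?_
    filter_upwards [eventually_ge_atTop 1] with y hy
    have h0 : 0 ≤ y := by linarith
    rw [Complex.norm_real, Real.norm_of_nonneg (Gtail_nonneg h0),
      Real.norm_of_nonneg (Real.exp_pos _).le]
    simpa using Gtail_le_exp hy
  · refine Asymptotics.IsBigO.of_bound ((1/2) * Real.Gamma (1/4)) ?_
    filter_upwards [self_mem_nhdsWithin] with y hy
    have h0 : 0 ≤ y := le_of_lt hy
    rw [Complex.norm_real, Real.norm_of_nonneg (Gtail_nonneg h0)]
    simpa using Gtail_le h0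

lemma exp_mellin {s : ℂ} (hs : 0 < s.re) :
    MellinConvergent (fun t : ℝ => ((Real.exp (-t ^ (2:ℝ)) : ℝ) : ℂ)) s ∧
    mellin (fun t : ℝ => ((Real.exp (-t ^ (2:ℝ)) : ℝ) : ℂ)) s = (1/2) * Complex.Gamma (s / 2) := by
  have hs2 : 0 < (s / 2).re := by simpa using hs
  constructor
  · have := (MellinConvergent.comp_rpow (f := fun t : ℝ => ((Real.exp (-t) : ℝ) : ℂ)) (s := s)
      (a := 2) (by norm_num)).mpr (by
        have := Complex.GammaIntegral_convergent hs2
        unfold MellinConvergent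
        refine this.congr_fun (fun x _ => ?_) measurableSet_Ioi
        simp [mul_comm])
    exact this
  · have := mellin_comp_rpow (fun t : ℝ => ((Real.exp (-t) : ℝ) : ℂ)) s 2
    rw [this, Complex.Gamma_eq_integral hs2, Complex.GammaIntegral_eq_mellin]
    simp

lemma Gc_mellin {s : ℂ} (hs : 0 < s.re) :
    mellin (fun y => (Gtail y : ℂ)) s = (1/2) * Complex.Gamma ((2 * s + 1) / 4) / s := by
  have hs0 : s ≠ 0 := by rintro rfl; simp at hs
  have hs' : 0 < (s + 1/2).re := by
    have : (s + 1/2).re = s.re + 1/2 := by simp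
    rw [this]; linarith
  obtain ⟨hc, hm⟩ := exp_mellin hs'
  have key : ∀ t ∈ Ioi (0:ℝ), ((-hker t : ℝ) : ℂ) * ((t:ℂ) ^ s / s) =
      (-1/s) * ((t:ℂ) ^ (s + 1/2 - 1) • ((Real.exp (-t ^ (2:ℝ)) : ℝ) : ℂ)) := by
    intro t ht
    have ht0 : (t:ℂ) ≠ 0 := by exact_mod_cast ne_of_gt ht
    have : s + 1/2 - 1 = s + ((-(1/2) : ℝ) : ℂ) := by push_cast; ring
    rw [this, Complex.cpow_add _ _ ht0, ← Complex.ofReal_cpow (le_of_lt ht)]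
    unfold hker
    push_cast
    simp only [smul_eq_mul]
    ring
  have hlim : ∀ t : ℝ, 0 < t → ‖(Gtail t : ℂ) * ((t:ℂ) ^ s / s)‖ = Gtail t * t ^ s.re / ‖s‖ := by
    intro t ht
    rw [norm_mul, norm_div, Complex.norm_real, Real.norm_of_nonneg (Gtail_nonneg ht.le),
      Complex.norm_cpow_eq_rpow_re_of_pos ht, mul_div_assoc]
  have h := integral_Ioi_mul_deriv_eq_deriv_mul (a := (0:ℝ)) (a' := (0:ℂ)) (b' := 0)
    (u := fun y => (Gtail y : ℂ)) (v := fun t : ℝ => (t:ℂ) ^ s / s)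
    (u' := fun t => ((-hker t : ℝ) : ℂ)) (v' := fun t : ℝ => (t:ℂ) ^ (s - 1))
    (fun t ht => (Gtail_deriv ht).ofReal_comp)
    (fun t ht => by
      have := (hasDerivAt_ofReal_cpow_const' (r := s - 1) (ne_of_gt (mem_Ioi.mp ht)) (by
        intro h; apply hs0; linear_combination h))
      simpa using this)
    (by
      refine IntegrableOn.congr_fun (Gc_conv hs) (fun t _ => ?_) measurableSet_Ioi
      simp [mul_comm])
    (by
      refine IntegrableOn.congr_fun (Integrable.const_mul hc (-1/s)) (fun t ht => ?_)
        measurableSet_Ioi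
      exact (key t ht).symm)
    (by
      apply squeeze_zero_norm' (a := fun t => (1/2) * Real.Gamma (1/4) * t ^ s.re / ‖s‖)
      · filter_upwards [self_mem_nhdsWithin] with t ht
        have ht : 0 < t := ht
        rw [Pi.mul_apply, hlim t ht]
        gcongr
        exact Gtail_le ht.le
      · have : ContinuousAt (fun t : ℝ => (1/2) * Real.Gamma (1/4) * t ^ s.re / ‖s‖) 0 := by
          have := Real.continuousAt_rpow_const 0 s.re (Or.inr hs.le)
          fun_prop
        have h := this.tendsto.mono_left (nhdsWithin_le_nhds (s := Ioi 0))
        simpa [Real.zero_rpow hs.ne'] using h)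
    (by
      apply squeeze_zero_norm' (a := fun t => t ^ s.re * Real.exp (-1 * t) / ‖s‖)
      · filter_upwards [eventually_ge_atTop 1] with t ht
        have ht0 : 0 < t := by linarith
        rw [Pi.mul_apply, hlim t ht0, mul_comm (Gtail t)]
        gcongr
        simpa using Gtail_le_exp ht
      · simpa using (tendsto_rpow_mul_exp_neg_mul_atTop_nhds_zero s.re 1 one_pos).div_const ‖s‖)
  have h1 : mellin (fun y => (Gtail y : ℂ)) s =
      ∫ t in Ioi (0:ℝ), (Gtail t : ℂ) * (t:ℂ) ^ (s - 1) := by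
    simp only [mellin, smul_eq_mul, mul_comm]
  rw [h1, h, setIntegral_congr_fun measurableSet_Ioi key, integral_const_mul]
  rw [mellin] at hm
  rw [hm]
  have : (s + 1/2) / 2 = (2 * s + 1) / 4 := by ring
  rw [this]
  ring

lemma Gamma_norm_le {s : ℂ} (hs : 0 < s.re) : ‖Complex.Gamma s‖ ≤ Real.Gamma s.re := by
  rw [Complex.Gamma_eq_integral hs, Real.Gamma_eq_integral hs, Complex.GammaIntegral]
  refine (norm_integral_le_integral_norm _).trans (le_of_eq ?_)
  refine setIntegral_congr_fun measurableSet_Ioi (fun t ht => ?_)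
  rw [norm_mul, Complex.norm_cpow_eq_rpow_re_of_pos ht, Complex.norm_real,
    Real.norm_of_nonneg (Real.exp_pos _).le]
  simp

lemma Gc_vert : VerticalIntegrable (mellin (fun y => (Gtail y : ℂ))) 1 := by
  unfold VerticalIntegrable
  have hre : ∀ t : ℝ, 0 < (((1:ℝ):ℂ) + t * I).re := by intro t; simp
  have hre2 : ∀ t : ℝ, ((2 * (((1:ℝ):ℂ) + t * I) + 1) / 4).re = 3/4 := by
    intro t
    have : (2 * (((1:ℝ):ℂ) + t * I) + 1) / 4 = ((3/4 : ℝ) : ℂ) + ((t/2 : ℝ) : ℂ) * I := by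
      push_cast; ring
    rw [this]; simp
  have hfun : (fun t : ℝ => mellin (fun y => (Gtail y : ℂ)) (((1:ℝ):ℂ) + t * I)) =
      fun t : ℝ => (1/2) * Complex.Gamma ((2 * (((1:ℝ):ℂ) + t * I) + 1) / 4) /
        (((1:ℝ):ℂ) + t * I) := by
    funext t; exact Gc_mellin (hre t)
  rw [hfun]
  refine Integrable.mono' (integrable_inv_one_add_sq.const_mul (Real.Gamma (7/4))) ?_ ?_
  · refine Continuous.aestronglyMeasurable ?_
    rw [continuous_iff_continuousAt]
    intro t
    have h1 : ContinuousAt Complex.Gamma ((2 * (((1:ℝ):ℂ) + t * I) + 1) / 4) := by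
      refine (Complex.differentiableAt_Gamma _ ?_).continuousAt
      intro m hm
      have := congrArg Complex.re hm
      rw [hre2] at this
      simp at this
      have h0 : (0:ℝ) ≤ m := m.cast_nonneg
      linarith
    have h2 : ContinuousAt (fun t : ℝ => (2 * (((1:ℝ):ℂ) + t * I) + 1) / 4) t := by fun_prop
    have h3 := ContinuousAt.comp (f := fun t : ℝ => (2 * (((1:ℝ):ℂ) + t * I) + 1) / 4) h1 h2
    refine (h3.const_mul (1/2)).div (by fun_prop) ?_
    intro h
    have := hre t
    rw [h] at this; simp at this
  · refine Eventually.of_forall (fun t => ?_)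
    set w : ℂ := (2 * (((1:ℝ):ℂ) + t * I) + 1) / 4 with hw
    have hw0 : w ≠ 0 := by
      intro h
      have := hre2 t
      rw [← hw, h] at this; norm_num at this
    have hG : Complex.Gamma w = Complex.Gamma (w + 1) / w := by
      rw [Complex.Gamma_add_one w hw0]; field_simp
    have hb : ‖Complex.Gamma (w + 1)‖ ≤ Real.Gamma (7/4) := by
      have h74 : (w + 1).re = 7/4 := by
        rw [Complex.add_re, hre2 t]; norm_num
      have := Gamma_norm_le (s := w + 1) (by rw [h74]; norm_num)
      rwa [h74] at this
    have hz : ‖((1:ℝ):ℂ) + t * I‖ ^ 2 = 1 + t ^ 2 := by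
      rw [← Complex.normSq_eq_norm_sq, Complex.normSq_add_mul_I]; simp
    have hwn : ‖((1:ℝ):ℂ) + t * I‖ ≤ 2 * ‖w‖ := by
      have e : w = ((3/4 : ℝ) : ℂ) + ((t/2 : ℝ) : ℂ) * I := by
        rw [hw]; push_cast; ring
      have hw2 : ‖w‖ ^ 2 = 9/16 + t ^ 2 / 4 := by
        rw [e, ← Complex.normSq_eq_norm_sq, Complex.normSq_add_mul_I]; ring
      refine le_of_sq_le_sq ?_ (by positivity)
      rw [mul_pow, hz, hw2]; nlinarith
    have hzpos : 0 < ‖((1:ℝ):ℂ) + t * I‖ := by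
      have : 0 < ‖((1:ℝ):ℂ) + t * I‖ ^ 2 := by rw [hz]; positivity
      exact lt_of_le_of_ne (norm_nonneg _) (fun h => by rw [← h] at this; norm_num at this)
    have hwpos : 0 < ‖w‖ := norm_pos_iff.mpr hw0
    rw [hG, norm_div, norm_mul, norm_div (Complex.Gamma (w + 1)), ← hz]
    have e1 : ‖(1/2 : ℂ)‖ = 1/2 := by norm_num
    rw [e1]
    have hΓ : 0 ≤ Real.Gamma (7/4) := (Real.Gamma_pos_of_pos (by norm_num)).le
    calc 1/2 * (‖Complex.Gamma (w + 1)‖ / ‖w‖) / ‖((1:ℝ):ℂ) + t * I‖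
        = ‖Complex.Gamma (w + 1)‖ / (2 * ‖w‖ * ‖((1:ℝ):ℂ) + t * I‖) := by field_simp
      _ ≤ Real.Gamma (7/4) / (‖((1:ℝ):ℂ) + t * I‖ * ‖((1:ℝ):ℂ) + t * I‖) := by gcongr
      _ = _ := by rw [div_eq_mul_inv, sq]

lemma V₁_eq {x : ℝ} (hx : 0 < x) :
    V₁ x = ((2 / Real.Gamma (1/4) * Gtail (Real.sqrt Real.pi * x) : ℝ) : ℂ) := by
  have hy : 0 < Real.sqrt Real.pi * x := by positivity
  have h := mellinInv_mellin_eq 1 (fun y => (Gtail y : ℂ)) hy (Gc_conv (by simp)) Gc_vert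
    (continuous_ofReal.continuousAt.comp (Gtail_deriv hy).continuousAt)
  have hΓ : Complex.Gamma (1/4) = ((Real.Gamma (1/4) : ℝ) : ℂ) := by
    rw [← Complex.Gamma_ofReal]; norm_num
  rw [Complex.ofReal_mul, ← h]
  unfold V₁ mellinInv
  rw [Complex.real_smul, mul_left_comm]
  push_cast
  congr 1
  rw [← integral_const_mul]
  congr 1
  funext t
  have hre : 0 < ((1:ℂ) + t * I).re := by simp
  rw [Gc_mellin hre, hΓ]
  simp only [smul_eq_mul]
  push_cast
  ring

end helpers

/-- **`V₁(x) ∼ 1` for small `x`.** For every `δ ∈ (0, 1/2)` there is `K > 0` such that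
`|V₁(x) - 1| ≤ K · x^{1/2 - δ}` for all `0 < x ≤ 1`. -/
theorem stmt3 (δ : ℝ) (hδ : δ ∈ Set.Ioo 0 (1 / 2 : ℝ)) :
    ∃ K > 0, ∀ x : ℝ, 0 < x → x ≤ 1 →
      ‖V₁ x - 1‖ ≤ K * x ^ (1 / 2 - δ) := by
  have hΓ : 0 < Real.Gamma (1/4) := Real.Gamma_pos_of_pos (by norm_num)
  have hπ : 0 < Real.sqrt Real.pi := Real.sqrt_pos.mpr Real.pi_pos
  refine ⟨2 / Real.Gamma (1/4) * (2 * Real.sqrt Real.pi ^ (1/2 : ℝ)), by positivity, ?_⟩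
  intro x hx hx1
  rw [V₁_eq hx, ← Complex.ofReal_one, ← Complex.ofReal_sub, Complex.norm_real, Real.norm_eq_abs]
  have e : 2 / Real.Gamma (1/4) * Gtail (Real.sqrt Real.pi * x) - 1 =
      2 / Real.Gamma (1/4) * (Gtail (Real.sqrt Real.pi * x) - (1/2) * Real.Gamma (1/4)) := by
    field_simp
  rw [e, abs_mul, abs_of_pos (by positivity : 0 < 2 / Real.Gamma (1/4)), mul_assoc]
  refine mul_le_mul_of_nonneg_left ?_ (by positivity)
  refine (Gtail_near (by positivity)).trans ?_
  rw [Real.mul_rpow hπ.le hx.le, ← mul_assoc]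
  refine mul_le_mul_of_nonneg_left ?_ (by positivity)
  exact Real.rpow_le_rpow_of_exponent_ge hx hx1 (by linarith [hδ.1])
end

section
/- Let W : ℝ → ℂ be a smooth function with compact support contained in [1, 2]. For every nonnegative integer B and every δ > 0 there exists a constant C > 0 (depending on W, B, δ) such that for every prime q, every real M with 1 ≤ M ≤ q^{1/2+δ}, and every nonzero integer m, |∫_ℝ V₁(yM/√q) · W(y) · e(−mMy/q) dy| ≤ C · (q^{1+δ}/(|m|·M))^B. -/
open Complex

open MeasureTheory Set Filter Topology

noncomputable def kk (u : ℝ) : ℝ := u ^ (-(1/2) : ℝ) * Real.exp (-Real.pi * u ^ 2)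
noncomputable def ff (x : ℝ) : ℝ := ∫ u in Ioi x, kk u

lemma kk_int : IntegrableOn kk (Ioi 0) :=
  integrableOn_rpow_mul_exp_neg_mul_sq Real.pi_pos (by norm_num)

lemma kk_nonneg {u : ℝ} (hu : 0 < u) : 0 ≤ kk u := by unfold kk; positivity

lemma kk_cont {u : ℝ} (hu : 0 < u) : ContinuousAt kk u := by
  unfold kk
  have := Real.continuousAt_rpow_const u (-(1/2)) (Or.inl hu.ne')
  fun_prop

lemma ff_deriv {x : ℝ} (hx : 0 < x) : HasDerivAt ff (-kk x) x := by
  have h1 : ∀ y ∈ Ioi (0:ℝ), ff y = (∫ u in Ioi 0, kk u) - ∫ u in (0:ℝ)..y, kk u := by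
    intro y hy
    have := intervalIntegral.integral_interval_add_Ioi (f := kk) (a := 0) (b := y) (μ := volume) kk_int
      (kk_int.mono_set (Ioi_subset_Ioi (le_of_lt hy)))
    rw [← this]; unfold ff; ring
  have h2 : HasDerivAt (fun y => ∫ u in (0:ℝ)..y, kk u) (kk x) x := by
    apply intervalIntegral.integral_hasDerivAt_right
    · rw [intervalIntegrable_iff_integrableOn_Ioc_of_le hx.le]
      exact kk_int.mono_set Ioc_subset_Ioi_self
    · exact ContinuousOn.stronglyMeasurableAtFilter isOpen_Ioi
        (fun u hu => (kk_cont hu).continuousWithinAt) x hx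
    · exact kk_cont hx
  have h3 := h2.const_sub (∫ u in Ioi 0, kk u)
  exact h3.congr_of_eventuallyEq (by filter_upwards [Ioi_mem_nhds hx] with y hy using h1 y hy)

lemma ff_nonneg {x : ℝ} (hx : 0 ≤ x) : 0 ≤ ff x :=
  setIntegral_nonneg measurableSet_Ioi fun u hu => kk_nonneg (lt_of_le_of_lt hx hu)

lemma ff_le {x : ℝ} (hx : 0 ≤ x) : ff x ≤ ff 0 :=
  setIntegral_mono_set kk_int
    (by filter_upwards [ae_restrict_mem measurableSet_Ioi] with _ hu using kk_nonneg hu)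
    (Ioi_subset_Ioi hx).eventuallyLE

lemma ff_le_exp {x : ℝ} (hx : 1 ≤ x) : ff x ≤ Real.exp (-x) := by
  rw [← integral_exp_neg_Ioi x]
  refine setIntegral_mono_on (kk_int.mono_set (Ioi_subset_Ioi (by linarith)))
    (integrableOn_exp_neg_Ioi x) measurableSet_Ioi fun u hu => ?_
  have hu1 : 1 ≤ u := hx.trans (le_of_lt hu)
  unfold kk
  have h1 : u ^ (-(1/2) : ℝ) ≤ 1 := Real.rpow_le_one_of_one_le_of_nonpos hu1 (by norm_num)
  have h2 : Real.exp (-Real.pi * u ^ 2) ≤ Real.exp (-u) := by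
    apply Real.exp_le_exp.2
    have := Real.pi_gt_three
    nlinarith
  calc _ ≤ 1 * Real.exp (-Real.pi * u ^ 2) := by gcongr
    _ ≤ _ := by linarith

lemma ff_bound : ∃ K, 0 ≤ K ∧ ∀ x, 0 ≤ x → |ff x| ≤ K * Real.exp (-x) := by
  refine ⟨max 1 (ff 0 * Real.exp 1), by positivity, fun x hx => ?_⟩
  rw [abs_of_nonneg (ff_nonneg hx)]
  rcases le_total 1 x with h | h
  · calc _ ≤ 1 * Real.exp (-x) := by simpa using ff_le_exp h
      _ ≤ _ := by gcongr; exact le_max_left _ _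
  · calc ff x ≤ ff 0 := ff_le hx
      _ ≤ ff 0 * (Real.exp 1 * Real.exp (-x)) := by
        rw [← Real.exp_add]
        exact le_mul_of_one_le_right (ff_nonneg le_rfl) (Real.one_le_exp (by linarith))
      _ = (ff 0 * Real.exp 1) * Real.exp (-x) := by ring
      _ ≤ _ := by gcongr; exact le_max_right _ _

noncomputable def FF (x : ℝ) : ℂ := (ff x : ℂ)

lemma FF_deriv {x : ℝ} (hx : 0 < x) : HasDerivAt FF (-kk x : ℂ) x := by
  have := (ff_deriv hx).ofReal_comp
  rw [ofReal_neg] at this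
  exact this

lemma FF_mellinConv (s : ℂ) (hs : s.re = 1) : MellinConvergent FF s := by
  obtain ⟨K, hK, hb⟩ := ff_bound
  unfold MellinConvergent
  refine Integrable.mono' ((integrableOn_exp_neg_Ioi 0).const_mul K) ?_ ?_
  · refine ContinuousOn.aestronglyMeasurable (fun x hx => ?_) measurableSet_Ioi
    have h1 := (FF_deriv hx).continuousAt
    have h2 : ContinuousAt (fun t : ℝ => (t : ℂ) ^ (s - 1)) x :=
      continuousAt_ofReal_cpow_const _ _ (Or.inr (ne_of_gt hx))
    exact (h2.smul h1).continuousWithinAt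
  · filter_upwards [ae_restrict_mem measurableSet_Ioi] with x hx
    rw [norm_smul, norm_cpow_eq_rpow_re_of_pos hx]
    simp [hs, FF]
    exact hb x (le_of_lt hx)

lemma mellin_gauss {z : ℂ} (hz : 0 < z.re) :
    mellin (fun t : ℝ => cexp (-(Real.pi * (t ^ (2:ℝ) : ℝ)))) z
      = (1/2) * ((Real.pi : ℂ) ^ (-(z/2)) * Gamma (z/2)) := by
  have := mellin_comp_rpow (fun t : ℝ => cexp (-(Real.pi * (t : ℝ)))) z 2
  rw [this]
  have h := integral_cpow_mul_exp_neg_mul_Ioi (a := z/2) (r := Real.pi) (by simpa using hz) (by simpa using Real.pi_pos)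
  unfold mellin
  simp only [smul_eq_mul]
  push_cast
  rw [h, one_div, inv_cpow, cpow_neg]
  · simp
  · rw [arg_ofReal_of_nonneg Real.pi_pos.le]; exact Real.pi_pos.ne

lemma kk_mul_cpow_norm {x : ℝ} (hx : 0 < x) (s : ℂ) (hs : s.re = 1) :
    ‖(-kk x : ℂ) * ((x : ℂ) ^ s / s)‖ = ‖s‖⁻¹ * (x ^ (1/2 : ℝ) * Real.exp (-Real.pi * x ^ 2)) := by
  rw [norm_mul, norm_neg, norm_div, norm_cpow_eq_rpow_re_of_pos hx, hs, norm_real,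
    Real.norm_of_nonneg (kk_nonneg hx), Real.rpow_one]
  have : x ^ (1/2 : ℝ) = x ^ (-(1/2) : ℝ) * x := by
    rw [← Real.rpow_add_one hx.ne']; norm_num
  rw [this]; unfold kk; ring

lemma FF_lim (s : ℂ) (hs : s.re = 1) (l : Filter ℝ) (hl : ∀ᶠ x in l, 0 < x)
    (h : Tendsto (fun x : ℝ => x ^ 1 * Real.exp (-x)) l (𝓝 0)) :
    Tendsto (FF * fun x : ℝ => (x : ℂ) ^ s / s) l (𝓝 0) := by
  obtain ⟨K, hK, hb⟩ := ff_bound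
  have h' := h.const_mul (K * ‖s‖⁻¹)
  rw [mul_zero] at h'
  refine squeeze_zero_norm' ?_ h'
  filter_upwards [hl] with x hx
  simp only [Pi.mul_apply]
  rw [norm_mul, norm_div, norm_cpow_eq_rpow_re_of_pos hx, hs, Real.rpow_one, FF, norm_real]
  have := hb x hx.le
  rw [Real.norm_eq_abs, pow_one]
  calc |ff x| * (x / ‖s‖) ≤ K * Real.exp (-x) * (x / ‖s‖) := by gcongr
    _ = _ := by ring

lemma FF_mellin (s : ℂ) (hs : s.re = 1) :
    mellin FF s = s⁻¹ * ((1/2) * ((Real.pi : ℂ) ^ (-((s + 1/2)/2)) * Gamma ((s + 1/2)/2))) := by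
  have hs0 : s ≠ 0 := by rintro rfl; simp at hs
  have hv : ∀ x ∈ Ioi (0:ℝ), HasDerivAt (fun x : ℝ => (x : ℂ) ^ s / s) ((x : ℂ) ^ (s - 1)) x := by
    intro x hx
    have := (hasDerivAt_ofReal_cpow_const (x := x) (ne_of_gt hx) (r := s) hs0).div_const s
    rwa [mul_div_cancel_left₀ _ hs0] at this
  have hconv := FF_mellinConv s hs
  have hint2 : IntegrableOn ((fun x : ℝ => (-kk x : ℂ)) * fun x : ℝ => (x : ℂ) ^ s / s) (Ioi 0) := by
    refine Integrable.mono' ((integrableOn_rpow_mul_exp_neg_mul_sq Real.pi_pos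
      (s := 1/2) (by norm_num)).const_mul ‖s‖⁻¹) ?_ ?_
    · refine ContinuousOn.aestronglyMeasurable (fun x hx => ?_) measurableSet_Ioi
      have h1 := continuous_ofReal.continuousAt.comp (kk_cont hx)
      exact (h1.neg.mul (hv x hx).continuousAt).continuousWithinAt
    · filter_upwards [ae_restrict_mem measurableSet_Ioi] with x hx
      exact (kk_mul_cpow_norm hx s hs).le
  have key := integral_Ioi_mul_deriv_eq_deriv_mul (a := (0:ℝ)) (u := FF)
    (v := fun x : ℝ => (x : ℂ) ^ s / s) (u' := fun x => (-kk x : ℂ))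
    (v' := fun x : ℝ => (x : ℂ) ^ (s - 1)) (a' := 0) (b' := 0)
    (fun x hx => FF_deriv hx) hv
    (by refine hconv.congr_fun (fun x _ => ?_) measurableSet_Ioi
        simp [mul_comm]) hint2
    (FF_lim s hs _ self_mem_nhdsWithin (by
      have : Continuous (fun x : ℝ => x ^ 1 * Real.exp (-x)) := by fun_prop
      have := this.tendsto 0
      simp only [pow_one, zero_mul] at this ⊢
      exact this.mono_left nhdsWithin_le_nhds))
    (FF_lim s hs _ (eventually_gt_atTop 0) (Real.tendsto_pow_mul_exp_neg_atTop_nhds_zero 1))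
  have e1 : mellin FF s = ∫ x in Ioi (0:ℝ), FF x * (x : ℂ) ^ (s - 1) := by
    unfold mellin; simp only [smul_eq_mul, mul_comm]
  rw [e1, key, ← mellin_gauss (by simp [hs]; norm_num)]
  unfold mellin
  rw [← integral_const_mul, sub_zero, zero_sub, ← integral_neg]
  refine setIntegral_congr_fun measurableSet_Ioi fun x hx => ?_
  have hx0 : (x : ℂ) ≠ 0 := by exact_mod_cast ne_of_gt hx
  simp only [smul_eq_mul]
  have : (x : ℂ) ^ (s + 1/2 - 1) = (x : ℂ) ^ s * ((x ^ (-(1/2) : ℝ) : ℝ) : ℂ) := by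
    rw [ofReal_cpow (le_of_lt hx), ← cpow_add _ _ hx0]
    congr 1; push_cast; ring
  rw [this]
  unfold kk
  push_cast
  rw [show ((x ^ (2:ℝ) : ℝ) : ℂ) = (x:ℂ)^2 by norm_num]
  rw [show -((Real.pi : ℂ)) * (x:ℂ)^2 = -((Real.pi : ℂ) * (x:ℂ)^2) by ring]
  ring

lemma Gamma_norm_le_s11 {z : ℂ} (hz : 0 < z.re) : ‖Gamma z‖ ≤ Real.Gamma z.re := by
  rw [Gamma_eq_integral hz, Real.Gamma_eq_integral hz, GammaIntegral]
  refine (norm_integral_le_integral_norm _).trans (le_of_eq ?_)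
  refine setIntegral_congr_fun measurableSet_Ioi fun x hx => ?_
  simp only [norm_mul]
  rw [norm_cpow_eq_rpow_re_of_pos hx, norm_real, Real.norm_of_nonneg (Real.exp_pos _).le]
  simp

lemma FF_vert : VerticalIntegrable (mellin FF) 1 := by
  unfold VerticalIntegrable
  have hre : ∀ y : ℝ, (((1:ℝ):ℂ) + y * I).re = 1 := by intro y; simp
  have e : (fun y : ℝ => mellin FF (((1:ℝ):ℂ) + y * I)) = fun y : ℝ => (((1:ℝ):ℂ) + y * I)⁻¹ *
    ((1/2) * ((Real.pi : ℂ) ^ (-(((((1:ℝ):ℂ) + y * I) + 1/2)/2)) *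
      Gamma (((((1:ℝ):ℂ) + y * I) + 1/2)/2))) := by
    funext y; exact FF_mellin _ (hre y)
  rw [e]
  set c : ℝ := Real.pi ^ (-(3/4) : ℝ) * Real.Gamma (7/4) with hc
  refine Integrable.mono' (integrable_inv_one_add_sq.const_mul c) ?_ ?_
  · apply Continuous.aestronglyMeasurable
    have h1 : Continuous fun y : ℝ => (((1:ℝ):ℂ) + y * I) := by fun_prop
    have h2 : Continuous fun y : ℝ => (((1:ℝ):ℂ) + y * I)⁻¹ := h1.inv₀ (by
      intro y h; have := hre y; rw [h] at this; simp at this)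
    have h3 : Continuous fun y : ℝ => Gamma (((((1:ℝ):ℂ) + y * I) + 1/2)/2) := by
      rw [continuous_iff_continuousAt]
      intro y
      have hd : DifferentiableAt ℂ Gamma (((((1:ℝ):ℂ) + y * I) + 1/2)/2) := by
        apply differentiableAt_Gamma
        intro m h
        have := congrArg re h
        simp at this
        have hm : (0:ℝ) ≤ m := Nat.cast_nonneg m
        linarith
      exact hd.continuousAt.comp (f := fun y : ℝ => (((((1:ℝ):ℂ) + y * I) + 1/2)/2)) (by fun_prop)
    have h4 : Continuous fun y : ℝ => (Real.pi : ℂ) ^ (-(((((1:ℝ):ℂ) + y * I) + 1/2)/2)) := by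
      apply Continuous.const_cpow (by fun_prop)
      left; exact_mod_cast Real.pi_pos.ne'
    exact h2.mul (continuous_const.mul (h4.mul h3))
  · refine Eventually.of_forall fun y => ?_
    set s : ℂ := ((1:ℝ):ℂ) + y * I with hsdef
    set z : ℂ := (s + 1/2)/2 with hzdef
    have hsre : s.re = 1 := hre y
    have hsim : s.im = y := by simp [hsdef]
    have hzre : z.re = 3/4 := by simp [hzdef, hsre]; norm_num
    have hzim : z.im = y/2 := by simp [hzdef, hsim]
    have hz0 : z ≠ 0 := by intro h; rw [h] at hzre; norm_num at hzre
    have hG : ‖Gamma z‖ ≤ Real.Gamma (7/4) / ‖z‖ := by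
      rw [le_div_iff₀ (norm_pos_iff.2 hz0), ← norm_mul, mul_comm, ← Gamma_add_one z hz0]
      have := Gamma_norm_le_s11 (z := z + 1) (by simp [hzre]; norm_num)
      rw [add_re, hzre, one_re] at this
      norm_num at this ⊢
      exact this
    have hs2 : ‖s‖ ^ 2 = 1 + y ^ 2 := by rw [Complex.sq_norm, normSq_apply, hsre, hsim]; ring
    have hz2 : ‖z‖ ^ 2 = 9/16 + y^2/4 := by rw [Complex.sq_norm, normSq_apply, hzre, hzim]; ring
    have hzs : ‖s‖ / 2 ≤ ‖z‖ := by
      apply le_of_sq_le_sq _ (norm_nonneg _)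
      rw [div_pow, hs2, hz2]; linarith
    have hspos : 0 < ‖s‖ := by
      apply norm_pos_iff.2; intro h; rw [h] at hsre; simp at hsre
    have hpi : ‖(Real.pi : ℂ) ^ (-z)‖ = Real.pi ^ (-(3/4) : ℝ) := by
      rw [norm_cpow_eq_rpow_re_of_pos Real.pi_pos, neg_re, hzre]
    rw [norm_mul, norm_mul, norm_mul, hpi, norm_inv, ← hs2]
    have hGpos : 0 < Real.Gamma (7/4) := Real.Gamma_pos_of_pos (by norm_num)
    have : ‖Gamma z‖ ≤ Real.Gamma (7/4) / (‖s‖/2) := hG.trans (by gcongr)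
    calc _ ≤ ‖s‖⁻¹ * (‖(1/2:ℂ)‖ * (Real.pi ^ (-(3/4) : ℝ) * (Real.Gamma (7/4) / (‖s‖/2)))) := by
          gcongr
      _ = _ := by rw [hc]; norm_num; field_simp

lemma V₁_eq_s11 : ∃ c : ℝ, ∀ x : ℝ, 0 < x → V₁ x = c * FF x := by
  refine ⟨2 * Real.pi ^ (1/4 : ℝ) / Real.Gamma (1/4), fun x hx => ?_⟩
  have h := mellinInv_mellin_eq 1 FF hx (FF_mellinConv _ (by simp)) FF_vert (FF_deriv hx).continuousAt
  rw [← h, mellinInv, V₁]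
  rw [real_smul, ← mul_assoc, mul_comm (ofReal _), mul_assoc, ← integral_const_mul, ← integral_const_mul,
    ← integral_const_mul]
  congr 1
  funext t
  have e := FF_mellin (((1:ℝ):ℂ) + t * I) (by simp)
  rw [e]
  have hpi0 : (Real.pi : ℂ) ≠ 0 := by exact_mod_cast Real.pi_pos.ne'
  rw [ofReal_mul, mul_cpow_ofReal_nonneg (Real.sqrt_nonneg _) hx.le]
  have e1 : ((Real.sqrt Real.pi : ℝ) : ℂ) ^ (-(1 + t * I)) = (Real.pi : ℂ) ^ (-((((1:ℝ):ℂ) + t * I + 1/2)/2)) * ((Real.pi ^ (1/4 : ℝ) : ℝ) : ℂ) := by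
    rw [Real.sqrt_eq_rpow, ofReal_cpow Real.pi_pos.le, ofReal_cpow Real.pi_pos.le, ← cpow_add _ _ hpi0,
      cpow_def_of_ne_zero (by rw [← ofReal_cpow Real.pi_pos.le]; exact_mod_cast (Real.rpow_pos_of_pos Real.pi_pos _).ne'),
      ← ofReal_cpow Real.pi_pos.le, ← ofReal_log (by positivity), Real.log_rpow Real.pi_pos,
      cpow_def_of_ne_zero hpi0, ← ofReal_log Real.pi_pos.le]
    congr 1
    push_cast; ring
  rw [e1]
  have e2 : ((1:ℂ)/4) = ((1/4 : ℝ) : ℂ) := by push_cast; rfl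
  rw [e2, Gamma_ofReal, show (2 * (1 + (t:ℂ) * I) + 1) / 4 = ((((1:ℝ):ℂ) + t * I + 1/2)/2) by push_cast; ring]
  push_cast
  ring

def SW (W : ℝ → ℂ) : Prop := ContDiff ℝ (⊤ : ℕ∞) W ∧ Function.support W ⊆ Icc 1 2

lemma SW.zero {W : ℝ → ℂ} (h : SW W) {y : ℝ} (hy : y ∉ Icc (1:ℝ) 2) : W y = 0 := by
  by_contra hne
  exact hy (h.2 hne)

lemma SW.deriv {W : ℝ → ℂ} (h : SW W) : SW (deriv W) := by
  refine ⟨?_, ?_⟩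
  · exact (contDiff_infty_iff_deriv.1 h.1).2
  · exact support_deriv_subset.trans (closure_minimal h.2 isClosed_Icc)

lemma SW.mul {W p : ℝ → ℂ} (h : SW W) (hp : ∀ y, 0 < y → ContDiffAt ℝ (⊤ : ℕ∞) p y) :
    SW (fun y => p y * W y) := by
  refine ⟨?_, ?_⟩
  · rw [contDiff_iff_contDiffAt]
    intro y
    rcases lt_or_ge 0 y with hy | hy
    · exact (hp y hy).mul h.1.contDiffAt
    · have : (fun y => p y * W y) =ᶠ[𝓝 y] fun _ => 0 := by
        filter_upwards [Iio_mem_nhds (show y < 1 by linarith)] with x hx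
        rw [h.zero (fun hh => absurd hh.1 (not_le.2 hx)), mul_zero]
      exact contDiffAt_const.congr_of_eventuallyEq this
  · intro y hy
    apply h.2
    intro h0
    apply hy
    simp [h0]

noncomputable def EE (ξ y : ℝ) : ℂ := cexp (2 * Real.pi * I * (ξ * y))

lemma EE_norm (ξ y : ℝ) : ‖EE ξ y‖ = 1 := by
  unfold EE
  rw [show 2 * (Real.pi:ℂ) * I * (ξ * y) = ((2 * Real.pi * (ξ * y) : ℝ) : ℂ) * I by push_cast; ring]
  exact norm_exp_ofReal_mul_I _

lemma EE_cont (ξ : ℝ) : Continuous (EE ξ) := by unfold EE; fun_prop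

lemma EE_deriv (ξ y : ℝ) : HasDerivAt (EE ξ) (2 * Real.pi * I * ξ * EE ξ y) y := by
  have h1 : HasDerivAt (fun y : ℝ => 2 * (Real.pi:ℂ) * I * (ξ * (y:ℂ))) (2 * Real.pi * I * (ξ * 1)) y :=
    ((HasDerivAt.ofReal_comp (hasDerivAt_id y)).const_mul (ξ:ℂ)).const_mul _
  have := h1.cexp
  unfold EE
  convert this using 1
  ring

lemma ibp {g g' W : ℝ → ℂ} (hg : ∀ y, 0 < y → HasDerivAt g (g' y) y)
    (hg' : ContinuousOn g' (Ioi 0)) (hW : SW W) {ξ : ℝ} (hξ : ξ ≠ 0) :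
    ‖∫ y in (1/2:ℝ)..3, g y * W y * EE ξ y‖ ≤
      |ξ|⁻¹ * (‖∫ y in (1/2:ℝ)..3, g' y * W y * EE ξ y‖ +
        ‖∫ y in (1/2:ℝ)..3, g y * deriv W y * EE ξ y‖) := by
  have hI : uIcc (1/2:ℝ) 3 ⊆ Ioi 0 := by
    rw [uIcc_of_le (by norm_num)]
    intro y hy
    have := hy.1
    simp only [mem_Ioi]; linarith
  have hgc : ContinuousOn g (Ioi 0) := fun y hy => (hg y hy).continuousAt.continuousWithinAt
  have hWd : ∀ y, HasDerivAt W (deriv W y) y := fun y =>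
    ((hW.1.differentiable (by simp)) y).hasDerivAt
  have hWc : Continuous W := hW.1.continuous
  have hW'c : Continuous (deriv W) := hW.deriv.1.continuous
  have hu' : ContinuousOn (fun y => g' y * W y + g y * deriv W y) (uIcc (1/2:ℝ) 3) :=
    ((hg'.mul hWc.continuousOn).add (hgc.mul hW'c.continuousOn)).mono hI
  have key := intervalIntegral.integral_mul_deriv_eq_deriv_mul (a := (1/2:ℝ)) (b := 3)
    (u := fun y => g y * W y) (u' := fun y => g' y * W y + g y * deriv W y)
    (v := EE ξ) (v' := fun y => 2 * Real.pi * I * ξ * EE ξ y)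
    (fun y hy => (hg y (hI hy)).mul (hWd y)) (fun y _ => EE_deriv ξ y)
    hu'.intervalIntegrable
    ((continuous_const.mul (EE_cont ξ)).intervalIntegrable _ _)
  simp only [hW.zero (y := 3) (by simp; norm_num), hW.zero (y := 1/2) (by simp; norm_num)] at key
  have e1 : (∫ y in (1/2:ℝ)..3, g y * W y * (2 * Real.pi * I * ξ * EE ξ y))
      = (2 * Real.pi * I * ξ) * ∫ y in (1/2:ℝ)..3, g y * W y * EE ξ y := by
    rw [← intervalIntegral.integral_const_mul]
    congr 1; funext y; ring
  have e2 : (∫ y in (1/2:ℝ)..3, (g' y * W y + g y * deriv W y) * EE ξ y)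
      = (∫ y in (1/2:ℝ)..3, g' y * W y * EE ξ y) + ∫ y in (1/2:ℝ)..3, g y * deriv W y * EE ξ y := by
    rw [← intervalIntegral.integral_add]
    · congr 1; funext y; ring
    · exact (((hg'.mul hWc.continuousOn).mul (EE_cont ξ).continuousOn).mono hI).intervalIntegrable
    · exact (((hgc.mul hW'c.continuousOn).mul (EE_cont ξ).continuousOn).mono hI).intervalIntegrable
  rw [e1, e2] at key
  have hn := congrArg norm key
  simp only [mul_zero, zero_mul, sub_zero, zero_sub, norm_neg] at hn
  rw [norm_mul] at hn
  have hc : |ξ| ≤ ‖(2 * Real.pi * I * ξ : ℂ)‖ := by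
    simp only [norm_mul, norm_I, norm_real, Real.norm_eq_abs, mul_one, abs_of_pos Real.pi_pos]
    have := Real.pi_gt_three
    have h2 : ‖(2:ℂ)‖ = 2 := by simp
    rw [h2]
    nlinarith [abs_nonneg ξ]
  have hpos : 0 < |ξ| := abs_pos.2 hξ
  rw [inv_mul_eq_div, le_div_iff₀ hpos]
  calc _ ≤ ‖∫ y in (1/2:ℝ)..3, g y * W y * EE ξ y‖ * ‖(2 * Real.pi * I * ξ : ℂ)‖ := by gcongr
    _ = _ := by rw [mul_comm]; exact hn
    _ ≤ _ := norm_add_le _ _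

lemma SW.bdd {W : ℝ → ℂ} (h : SW W) : ∃ K, 0 ≤ K ∧ ∀ y, ‖W y‖ ≤ K := by
  have hc : HasCompactSupport W :=
    HasCompactSupport.of_support_subset_isCompact isCompact_Icc h.2
  obtain ⟨K, hK⟩ := hc.exists_bound_of_continuous h.1.continuous
  exact ⟨K, (norm_nonneg _).trans (hK 0), hK⟩

lemma base {g W : ℝ → ℂ} {G K ξ : ℝ} (hG : 0 ≤ G) (hW : SW W) (hK : ∀ y, ‖W y‖ ≤ K)
    (hg : ∀ y, 1 ≤ y → ‖g y‖ ≤ G) :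
    ‖∫ y in (1/2:ℝ)..3, g y * W y * EE ξ y‖ ≤ G * K * (5/2) := by
  have := intervalIntegral.norm_integral_le_of_norm_le_const (a := (1/2:ℝ)) (b := 3)
    (f := fun y => g y * W y * EE ξ y) (C := G * K) (by
      intro y _
      have hK0 : 0 ≤ K := (norm_nonneg _).trans (hK 0)
      rw [norm_mul, norm_mul, EE_norm, mul_one]
      by_cases hy : y ∈ Icc (1:ℝ) 2
      · exact mul_le_mul (hg y hy.1) (hK y) (norm_nonneg _) hG
      · rw [hW.zero hy]; simp; positivity)
  rwa [show |(3:ℝ) - 1/2| = 5/2 by rw [abs_of_pos] <;> norm_num] at this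

noncomputable def gg (n : ℕ) (r y : ℝ) : ℂ := ((r ^ n * Real.exp (-Real.pi * (r ^ 4 * y ^ 2)) : ℝ) : ℂ)

lemma gg_bound (n : ℕ) {r y : ℝ} (hr : 0 < r) (hy : 1 ≤ y) : ‖gg n r y‖ ≤ n.factorial := by
  unfold gg
  rw [norm_real, Real.norm_of_nonneg (by positivity)]
  have hpi := Real.pi_gt_three
  have hy2 : 1 ≤ y ^ 2 := one_le_pow₀ hy
  have hf : (1:ℝ) ≤ n.factorial := by exact_mod_cast Nat.one_le_iff_ne_zero.2 n.factorial_ne_zero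
  have hr4 : 0 < r ^ 4 := by positivity
  rcases le_total r 1 with h | h
  · have a : r ^ n ≤ 1 := pow_le_one₀ hr.le h
    have b : Real.exp (-Real.pi * (r ^ 4 * y ^ 2)) ≤ 1 := by
      apply Real.exp_le_one_iff.2
      have : 0 ≤ Real.pi * (r ^ 4 * y ^ 2) := by positivity
      linarith
    exact (mul_le_one₀ a (Real.exp_pos _).le b).trans hf
  · have h1 : r ^ n ≤ n.factorial * Real.exp r := by
      have := Real.pow_div_factorial_le_exp r hr.le n
      rw [div_le_iff₀ (by positivity)] at this
      linarith
    have h2 : r ≤ Real.pi * (r ^ 4 * y ^ 2) := by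
      have a : r ≤ r ^ 4 := le_self_pow₀ h (by norm_num)
      have b : r ^ 4 ≤ r ^ 4 * y ^ 2 := le_mul_of_one_le_right hr4.le hy2
      nlinarith
    calc _ ≤ n.factorial * Real.exp r * Real.exp (-Real.pi * (r ^ 4 * y ^ 2)) := by gcongr
      _ = n.factorial * Real.exp (r + -Real.pi * (r ^ 4 * y ^ 2)) := by rw [Real.exp_add]; ring
      _ ≤ n.factorial * 1 := by
          gcongr
          apply Real.exp_le_one_iff.2
          linarith
      _ = _ := mul_one _

lemma gg_deriv (n : ℕ) (r y : ℝ) : HasDerivAt (gg n r) (gg (n+4) r y * (-2 * Real.pi * y)) y := by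
  have h1 : HasDerivAt (fun y : ℝ => -Real.pi * (r ^ 4 * y ^ 2)) (-Real.pi * (r ^ 4 * (2 * y))) y := by
    have := ((hasDerivAt_pow 2 y).const_mul (r^4)).const_mul (-Real.pi)
    simpa using this
  have h2 := (h1.exp.const_mul (r ^ n)).ofReal_comp
  unfold gg
  convert h2 using 1
  push_cast
  ring

lemma gg_cont (n : ℕ) (r : ℝ) : Continuous (gg n r) := by
  unfold gg; fun_prop

lemma gauss_decay (B : ℕ) : ∀ (n : ℕ) (W : ℝ → ℂ), SW W → ∃ C, 0 ≤ C ∧ ∀ r : ℝ, 0 < r → ∀ ξ : ℝ, ξ ≠ 0 →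
    ‖∫ y in (1/2:ℝ)..3, gg n r y * W y * EE ξ y‖ ≤ C * (|ξ|⁻¹) ^ B := by
  induction B with
  | zero =>
    intro n W hW
    obtain ⟨K, hK0, hK⟩ := hW.bdd
    refine ⟨n.factorial * K * (5/2), by positivity, fun r hr ξ _ => ?_⟩
    rw [pow_zero, mul_one]
    exact base (by positivity) hW hK (fun y hy => gg_bound n hr hy)
  | succ B ih =>
    intro n W hW
    obtain ⟨C1, h1, H1⟩ := ih n _ hW.deriv
    obtain ⟨C2, h2, H2⟩ := ih (n+4) (fun y => (-2 * Real.pi * y : ℂ) * W y) (hW.mul (by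
      intro y _
      exact contDiffAt_const.mul ofRealCLM.contDiff.contDiffAt))
    refine ⟨C2 + C1, by positivity, fun r hr ξ hξ => ?_⟩
    have := ibp (g := gg n r) (g' := fun y => gg (n+4) r y * (-2 * Real.pi * y))
      (fun y _ => gg_deriv n r y)
      (by have := gg_cont (n+4) r; fun_prop) hW hξ
    have a := H1 r hr ξ hξ
    have b := H2 r hr ξ hξ
    simp only [← mul_assoc] at b this
    calc _ ≤ _ := this
      _ ≤ |ξ|⁻¹ * (C2 * |ξ|⁻¹ ^ B + C1 * |ξ|⁻¹ ^ B) := by gcongr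
      _ = _ := by ring

lemma FF_decay (B : ℕ) : ∀ (W : ℝ → ℂ), SW W → ∃ C, 0 ≤ C ∧ ∀ r : ℝ, 0 < r → ∀ ξ : ℝ, ξ ≠ 0 →
    ‖∫ y in (1/2:ℝ)..3, FF (y * r ^ 2) * W y * EE ξ y‖ ≤ C * (|ξ|⁻¹) ^ B := by
  induction B with
  | zero =>
    intro W hW
    obtain ⟨K, hK0, hK⟩ := hW.bdd
    have h0 := ff_nonneg (le_refl (0:ℝ))
    refine ⟨ff 0 * K * (5/2), by positivity, fun r hr ξ _ => ?_⟩
    rw [pow_zero, mul_one]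
    refine base h0 hW hK (fun y hy => ?_)
    have hp : 0 ≤ y * r ^ 2 := by positivity
    rw [FF, norm_real, Real.norm_of_nonneg (ff_nonneg hp)]
    exact ff_le hp
  | succ B ih =>
    intro W hW
    obtain ⟨C1, h1, H1⟩ := ih _ hW.deriv
    obtain ⟨C2, h2, H2⟩ := gauss_decay B 1 (fun y => (-(y ^ (-(1/2) : ℝ) : ℝ) : ℂ) * W y) (hW.mul (by
      intro y hy
      exact (ofRealCLM.contDiff.contDiffAt.comp y
        (Real.contDiffAt_rpow_const_of_ne hy.ne')).neg))
    refine ⟨C2 + C1, by positivity, fun r hr ξ hξ => ?_⟩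
    have := ibp (g := fun y => FF (y * r ^ 2)) (g' := fun y => gg 1 r y * (-(y ^ (-(1/2) : ℝ) : ℝ) : ℂ))
      (fun y hy => by
        have hp : 0 < y * r ^ 2 := by positivity
        have := (FF_deriv hp).scomp y ((hasDerivAt_id y).mul_const (r^2))
        refine this.congr_deriv ?_
        rw [kk, Real.mul_rpow hy.le (by positivity)]
        have e : (r ^ 2) ^ (-(1/2) : ℝ) = r⁻¹ := by
          rw [← Real.rpow_natCast, ← Real.rpow_mul hr.le, ← Real.rpow_neg_one]; norm_num
        rw [e, gg, real_smul, show -Real.pi * (y * r ^ 2) ^ 2 = -Real.pi * (r ^ 4 * y ^ 2) by ring]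
        have hr0 : (r : ℂ) ≠ 0 := by exact_mod_cast hr.ne'
        push_cast
        field_simp)
      (by
        refine (gg_cont 1 r).continuousOn.mul (ContinuousOn.neg ?_)
        intro y hy
        exact (continuous_ofReal.continuousAt.comp
          (Real.continuousAt_rpow_const y _ (Or.inl (ne_of_gt hy)))).continuousWithinAt) hW hξ
    have a := H1 r hr ξ hξ
    have b := H2 r hr ξ hξ
    simp only [← mul_assoc] at b this
    calc _ ≤ _ := this
      _ ≤ |ξ|⁻¹ * (C2 * |ξ|⁻¹ ^ B + C1 * |ξ|⁻¹ ^ B) := by gcongr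
      _ = _ := by ring

theorem stmt11 (W : ℝ → ℂ) (hW : ContDiff ℝ (⊤ : ℕ∞) W)
    (hsupp : Function.support W ⊆ Set.Icc 1 2) (B : ℕ) (δ : ℝ) (hδ : 0 < δ) :
    ∃ C > 0, ∀ q : ℕ, q.Prime → ∀ M : ℝ, 1 ≤ M → M ≤ (q : ℝ) ^ (1 / 2 + δ) →
      ∀ m : ℤ, m ≠ 0 →
        ‖∫ y : ℝ, V₁ (y * M / Real.sqrt q) * W y *
            Complex.exp (2 * Real.pi * I * (-(m * M * y) / q))‖ ≤
          C * ((q : ℝ) ^ (1 + δ) / (|(m : ℝ)| * M)) ^ B := by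
  have hSW : SW W := ⟨hW, hsupp⟩
  obtain ⟨c, hc⟩ := V₁_eq_s11
  obtain ⟨C, hC, H⟩ := FF_decay B W hSW
  refine ⟨|c| * C + 1, by positivity, fun q hq M hM _ m hm => ?_⟩
  have hq1 : (1:ℝ) ≤ q := by exact_mod_cast hq.one_le
  have hq0 : (0:ℝ) < q := by linarith
  have hM0 : 0 < M := by linarith
  have hX : 0 < M / Real.sqrt q := by positivity
  set r := Real.sqrt (M / Real.sqrt q) with hr
  have hr0 : 0 < r := Real.sqrt_pos.2 hX
  have hr2 : r ^ 2 = M / Real.sqrt q := Real.sq_sqrt hX.le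
  have hm' : (m : ℝ) ≠ 0 := by exact_mod_cast hm
  set ξ : ℝ := -(m * M) / q with hξ
  have hξ0 : ξ ≠ 0 := by
    rw [hξ]; exact div_ne_zero (neg_ne_zero.2 (mul_ne_zero hm' hM0.ne')) hq0.ne'
  have e1 : (∫ y : ℝ, V₁ (y * M / Real.sqrt q) * W y *
            Complex.exp (2 * Real.pi * I * (-(m * M * y) / q)))
      = c * ∫ y in (1/2:ℝ)..3, FF (y * r ^ 2) * W y * EE ξ y := by
    rw [intervalIntegral.integral_eq_integral_of_support_subset, ← integral_const_mul]
    · congr 1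
      funext y
      by_cases hy : y ∈ Icc (1:ℝ) 2
      · have hy0 : 0 < y := by linarith [hy.1]
        rw [hr2, mul_div_assoc y M, hc _ (by positivity), EE, hξ]
        have : (2 * Real.pi * I * (-(m * M * y) / q) : ℂ) = 2 * Real.pi * I * ((-(m * M) / q : ℝ) * y) := by
          push_cast; ring
        rw [this]; ring
      · rw [hSW.zero hy]; simp
    · intro y hy
      have : y ∈ Icc (1:ℝ) 2 := by
        by_contra h
        apply hy
        simp [hSW.zero h]
      constructor <;> linarith [this.1, this.2]
  rw [e1, norm_mul, norm_real, Real.norm_eq_abs]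
  have hmM : 0 < |(m:ℝ)| * M := mul_pos (abs_pos.2 hm') hM0
  have e2 : |ξ|⁻¹ = q / (|(m:ℝ)| * M) := by
    rw [hξ, abs_div, abs_neg, abs_mul, abs_of_pos hM0, abs_of_pos hq0, inv_div]
  have e3 : |ξ|⁻¹ ≤ (q : ℝ) ^ (1 + δ) / (|(m : ℝ)| * M) := by
    rw [e2]
    gcongr
    calc (q:ℝ) = (q:ℝ) ^ (1:ℝ) := (Real.rpow_one _).symm
      _ ≤ _ := Real.rpow_le_rpow_of_exponent_le hq1 (by linarith)
  calc _ ≤ |c| * (C * |ξ|⁻¹ ^ B) := by gcongr; exact H r hr0 ξ hξ0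
    _ = |c| * C * |ξ|⁻¹ ^ B := by ring
    _ ≤ (|c| * C + 1) * ((q : ℝ) ^ (1 + δ) / (|(m : ℝ)| * M)) ^ B := by
      gcongr
      linarith
end
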